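/- Let V ∈ L^p(Ω) with 1 < p < ∞ and V ≥ 0 a.e. For every f ∈ L²(Ω) there exists a unique u ∈ H₀(Ω) such that a(u,v) = ∫_Ω f v dxdy for all v ∈ H₀(Ω); that is, the Dirichlet boundary value problem −(y^{2α₁}∂ₓ²u + x^{2α₂}∂_y²u) + V u = f, u = 0 on ∂Ω, has a unique weak solution. -/

import Mathlib

open MeasureTheory Set Filter

noncomputable section

/-- The open unit square `Ω = (0,1) × (0,1)` in `ℝ²`. -/
def Omega : Set (ℝ × ℝ) := Ioo (0:ℝ) 1 ×ˢ Ioo (0:ℝ) 1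

/-- Test functions on a set `s`: smooth with compact support contained in `s`. -/
def IsTestOn (s : Set (ℝ × ℝ)) (φ : ℝ × ℝ → ℝ) : Prop :=
  ContDiff ℝ (⊤ : ℕ∞) φ ∧ HasCompactSupport φ ∧ tsupport φ ⊆ s

/-- Classical partial derivative in the `x`-direction. -/
def pdx (φ : ℝ × ℝ → ℝ) (p : ℝ × ℝ) : ℝ := fderiv ℝ φ p (1, 0)

/-- Classical partial derivative in the `y`-direction. -/
def pdy (φ : ℝ × ℝ → ℝ) (p : ℝ × ℝ) : ℝ := fderiv ℝ φ p (0, 1)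

/-- `g` is a weak `x`-partial derivative of `u` on `s`. -/
def HasWeakDerivXOn (s : Set (ℝ × ℝ)) (u g : ℝ × ℝ → ℝ) : Prop :=
  LocallyIntegrableOn u s volume ∧ LocallyIntegrableOn g s volume ∧
  ∀ φ : ℝ × ℝ → ℝ, IsTestOn s φ →
    ∫ p in s, u p * pdx φ p = - ∫ p in s, g p * φ p

/-- `g` is a weak `y`-partial derivative of `u` on `s`. -/
def HasWeakDerivYOn (s : Set (ℝ × ℝ)) (u g : ℝ × ℝ → ℝ) : Prop :=
  LocallyIntegrableOn u s volume ∧ LocallyIntegrableOn g s volume ∧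
  ∀ φ : ℝ × ℝ → ℝ, IsTestOn s φ →
    ∫ p in s, u p * pdy φ p = - ∫ p in s, g p * φ p

/-- Test functions on `Ω`. -/
def IsTest (φ : ℝ × ℝ → ℝ) : Prop := IsTestOn Omega φ

/-- Membership in the weighted Sobolev space `𝓗¹(Ω)`, with weak derivatives `gx, gy`:
`u ∈ L²(Ω)`, `gx = ∂ₓu`, `gy = ∂_y u` weakly, and `y^α₁ gx, x^α₂ gy ∈ L²(Ω)`. -/
structure MemH1 (α₁ α₂ : ℝ) (u gx gy : ℝ × ℝ → ℝ) : Prop where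
  memL2 : MemLp u 2 (volume.restrict Omega)
  weakX : HasWeakDerivXOn Omega u gx
  weakY : HasWeakDerivYOn Omega u gy
  wgx : MemLp (fun p => p.2 ^ α₁ * gx p) 2 (volume.restrict Omega)
  wgy : MemLp (fun p => p.1 ^ α₂ * gy p) 2 (volume.restrict Omega)

/-- The `𝓗¹(Ω)` norm of `u` (with weak derivatives `gx, gy`). -/
def H1Norm (α₁ α₂ : ℝ) (u gx gy : ℝ × ℝ → ℝ) : ℝ :=
  Real.sqrt ((∫ p in Omega, (u p) ^ 2) +
    (∫ p in Omega, (p.2 ^ α₁ * gx p) ^ 2) +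
    (∫ p in Omega, (p.1 ^ α₂ * gy p) ^ 2))

/-- Membership in `𝓗₀¹(Ω)`: member of `𝓗¹(Ω)` approximable in the `𝓗¹` norm by
test functions. -/
def MemH10 (α₁ α₂ : ℝ) (u gx gy : ℝ × ℝ → ℝ) : Prop :=
  MemH1 α₁ α₂ u gx gy ∧
  ∀ ε : ℝ, 0 < ε → ∃ φ : ℝ × ℝ → ℝ, IsTest φ ∧
    H1Norm α₁ α₂ (fun p => u p - φ p) (fun p => gx p - pdx φ p)
      (fun p => gy p - pdy φ p) < ε

/-- Membership in `H₀(Ω) = {u ∈ 𝓗₀¹(Ω) : ∫_Ω V u² < ∞}`. -/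
def MemH0 (α₁ α₂ : ℝ) (V u gx gy : ℝ × ℝ → ℝ) : Prop :=
  MemH10 α₁ α₂ u gx gy ∧
  IntegrableOn (fun p => V p * (u p) ^ 2) Omega volume

/-- The bilinear form `a(u,v)` associated with the sub-elliptic operator with potential `V`. -/
def aForm (α₁ α₂ : ℝ) (V u gx gy v hx hy : ℝ × ℝ → ℝ) : ℝ :=
  ∫ p in Omega, ((p.2 ^ α₁ * gx p) * (p.2 ^ α₁ * hx p) +
    (p.1 ^ α₂ * gy p) * (p.1 ^ α₂ * hy p) + V p * u p * v p)

/-- The bilinear form `a₁(u,v)` (no potential). -/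
def a1Form (α₁ α₂ : ℝ) (u gx gy v hx hy : ℝ × ℝ → ℝ) : ℝ :=
  ∫ p in Omega, ((p.2 ^ α₁ * gx p) * (p.2 ^ α₁ * hx p) +
    (p.1 ^ α₂ * gy p) * (p.1 ^ α₂ * hy p))

/-- Membership in `S_p = {V ∈ L^p(Ω) : V ≥ 0 a.e., ‖V‖_{L^p(Ω)} ≤ M}`. -/
def MemSp (ppow M : ℝ) (V : ℝ × ℝ → ℝ) : Prop :=
  MemLp V (ENNReal.ofReal ppow) (volume.restrict Omega) ∧
  (∀ᵐ p ∂(volume.restrict Omega), 0 ≤ V p) ∧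
  eLpNorm V (ENNReal.ofReal ppow) (volume.restrict Omega) ≤ ENNReal.ofReal M

/-- `u` (with weak derivatives `gx, gy`) is an eigenfunction of the sub-elliptic operator
with potential `V` for the eigenvalue `lam`. -/
def IsEigenfun (α₁ α₂ : ℝ) (V : ℝ × ℝ → ℝ) (lam : ℝ) (u gx gy : ℝ × ℝ → ℝ) : Prop :=
  MemH0 α₁ α₂ V u gx gy ∧
  ∀ v hx hy : ℝ × ℝ → ℝ, MemH0 α₁ α₂ V v hx hy →
    aForm α₁ α₂ V u gx gy v hx hy = lam * ∫ p in Omega, u p * v p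

/-- The first eigenvalue `λ₁(V) = inf { a(u,u) : u ∈ H₀(Ω), ‖u‖_{L²} = 1 }`. -/
def lam1 (α₁ α₂ : ℝ) (V : ℝ × ℝ → ℝ) : ℝ :=
  sInf { r | ∃ u gx gy : ℝ × ℝ → ℝ, MemH0 α₁ α₂ V u gx gy ∧
    (∫ p in Omega, (u p) ^ 2) = 1 ∧ r = aForm α₁ α₂ V u gx gy u gx gy }

/-- `sup { a(u,u) : u ∈ span(φ), ‖u‖_{L²(Ω)} = 1 }` for a finite family `φ` with
weak derivatives `φx, φy`. -/
def rayleighSup (α₁ α₂ : ℝ) (V : ℝ × ℝ → ℝ) {k : ℕ} (φ φx φy : Fin k → ℝ × ℝ → ℝ) : ℝ :=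
  sSup { s | ∃ c : Fin k → ℝ,
    (∫ p in Omega, (∑ i, c i * φ i p) ^ 2) = 1 ∧
    s = aForm α₁ α₂ V (fun p => ∑ i, c i * φ i p) (fun p => ∑ i, c i * φx i p)
      (fun p => ∑ i, c i * φy i p) (fun p => ∑ i, c i * φ i p)
      (fun p => ∑ i, c i * φx i p) (fun p => ∑ i, c i * φy i p) }

/-- The set of values `sup { a(u,u) : u ∈ E, ‖u‖ = 1 }` over `k`-dimensional
subspaces `E` of `H₀(Ω)` (represented by `L²(Ω)`-linearly independent families of
`k` elements of `H₀(Ω)`). -/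
def minmaxSet (α₁ α₂ : ℝ) (V : ℝ × ℝ → ℝ) (k : ℕ) : Set ℝ :=
  { r | ∃ φ φx φy : Fin k → ℝ × ℝ → ℝ,
      (∀ i, MemH0 α₁ α₂ V (φ i) (φx i) (φy i)) ∧
      (∀ c : Fin k → ℝ, (∀ᵐ p ∂(volume.restrict Omega), ∑ i, c i * φ i p = 0) → c = 0) ∧
      r = rayleighSup α₁ α₂ V φ φx φy }

/-- The `k`-th eigenvalue via the min-max principle. -/
def lamk (α₁ α₂ : ℝ) (V : ℝ × ℝ → ℝ) (k : ℕ) : ℝ := sInf (minmaxSet α₁ α₂ V k)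

/-- Membership in `U = (𝓗₀¹(Ω) ∩ L^{2q}(Ω)) \ {0}`. -/
def MemU (α₁ α₂ qe : ℝ) (u gx gy : ℝ × ℝ → ℝ) : Prop :=
  MemH10 α₁ α₂ u gx gy ∧
  MemLp u (ENNReal.ofReal (2 * qe)) (volume.restrict Omega) ∧
  ¬ (∀ᵐ p ∂(volume.restrict Omega), u p = 0)

/-- The functional `J(u) = (a₁(u,u) + M ‖u‖_{L^{2q}(Ω)}²) / ‖u‖_{L²(Ω)}²`. -/
def Jfun (α₁ α₂ M qe : ℝ) (u gx gy : ℝ × ℝ → ℝ) : ℝ :=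
  (a1Form α₁ α₂ u gx gy u gx gy +
    M * (∫ p in Omega, |u p| ^ (2 * qe)) ^ (1 / qe)) / (∫ p in Omega, (u p) ^ 2)

theorem muO_prod : volume.restrict Omega =
    (volume.restrict (Ioo (0:ℝ) 1)).prod (volume.restrict (Ioo (0:ℝ) 1)) := by
  rw [Measure.prod_restrict]; rfl

instance muO_fin : IsFiniteMeasure (volume.restrict Omega) := by
  rw [muO_prod]; infer_instance

theorem isOpen_Omega : IsOpen Omega := isOpen_Ioo.prod isOpen_Ioo

theorem one_dim (g : ℝ → ℝ) (hg : ContDiff ℝ 1 g) (h0 : g 0 = 0) (y : ℝ) (hy : y ∈ Ioo (0:ℝ) 1) :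
    g y ^ 2 ≤ y * ∫ t in Ioo (0:ℝ) 1, (deriv g t) ^ 2 := by
  have hc : Continuous (deriv g) := hg.continuous_deriv le_rfl
  have h1 : ∫ t in (0:ℝ)..y, deriv g t = g y := by
    rw [intervalIntegral.integral_deriv_eq_sub
      (fun x _ => (hg.differentiable one_ne_zero) x) (hc.intervalIntegrable _ _), h0, sub_zero]
  have h2 : ∫ t in (0:ℝ)..y, (deriv g t) ^ 2 ≤ ∫ t in Ioo (0:ℝ) 1, (deriv g t) ^ 2 := by
    rw [← integral_Ioc_eq_integral_Ioo, ← intervalIntegral.integral_of_le zero_le_one]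
    apply intervalIntegral.integral_mono_interval le_rfl hy.1.le hy.2.le
    · exact Eventually.of_forall fun t => sq_nonneg _
    · exact (hc.pow 2).intervalIntegrable _ _
  have h3 : 0 ≤ ∫ t in (0:ℝ)..y, (y * deriv g t - g y) ^ 2 :=
    intervalIntegral.integral_nonneg hy.1.le fun t _ => sq_nonneg _
  have h4 : ∫ t in (0:ℝ)..y, (y * deriv g t - g y) ^ 2 =
      y ^ 2 * (∫ t in (0:ℝ)..y, (deriv g t) ^ 2) - 2 * y * g y * g y + y * g y ^ 2 := by
    have : ∀ t, (y * deriv g t - g y) ^ 2 =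
      y ^ 2 * (deriv g t) ^ 2 - 2 * y * g y * deriv g t + g y ^ 2 := fun t => by ring
    simp_rw [this]
    rw [intervalIntegral.integral_add, intervalIntegral.integral_sub,
      intervalIntegral.integral_const_mul, intervalIntegral.integral_const_mul, h1]
    · simp
    all_goals exact (by fun_prop : Continuous _).intervalIntegrable _ _
  rw [h4] at h3
  have h5 : 0 ≤ y * (y * (∫ t in (0:ℝ)..y, (deriv g t) ^ 2) - g y ^ 2) := by linarith
  have h6 := nonneg_of_mul_nonneg_right h5 hy.1
  nlinarith [hy.1]

theorem IsTest.cont_pd {φ : ℝ × ℝ → ℝ} (h : IsTest φ) (d : ℝ × ℝ) :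
    Continuous fun p => fderiv ℝ φ p d :=
  (h.1.continuous_fderiv (by simp)).clm_apply continuous_const

theorem IsTest.supp_pd {φ : ℝ × ℝ → ℝ} (h : IsTest φ) (d : ℝ × ℝ) :
    HasCompactSupport fun p => fderiv ℝ φ p d :=
  h.2.1.fderiv_apply (𝕜 := ℝ) d

theorem IsTest.tsupp_pd {φ : ℝ × ℝ → ℝ} (h : IsTest φ) (d : ℝ × ℝ) :
    tsupport (fun p => fderiv ℝ φ p d) ⊆ Omega :=
  (tsupport_fderiv_apply_subset ℝ d).trans h.2.2

theorem IsTest.memLp {φ : ℝ × ℝ → ℝ} (h : IsTest φ) : MemLp φ 2 (volume.restrict Omega) :=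
  (h.1.continuous.memLp_of_hasCompactSupport h.2.1).restrict _

theorem memLp_mul {w g : ℝ × ℝ → ℝ} (hw : Continuous w) (hg : Continuous g)
    (hs : HasCompactSupport g) :
    MemLp (fun p => w p * g p) 2 (volume.restrict Omega) :=
  ((hw.mul hg).memLp_of_hasCompactSupport (hs.mul_left)).restrict _

theorem IsTest.memLp_pd {φ : ℝ × ℝ → ℝ} (h : IsTest φ) (d : ℝ × ℝ) :
    MemLp (fun p => fderiv ℝ φ p d) 2 (volume.restrict Omega) :=
  ((h.cont_pd d).memLp_of_hasCompactSupport (h.supp_pd d)).restrict _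

theorem w1_cont {α : ℝ} (hα : 0 < α) : Continuous fun p : ℝ × ℝ => p.2 ^ α :=
  continuous_snd.rpow_const fun _ => Or.inr hα.le

theorem w2_cont {α : ℝ} (hα : 0 < α) : Continuous fun p : ℝ × ℝ => p.1 ^ α :=
  continuous_fst.rpow_const fun _ => Or.inr hα.le

theorem pow_bd {α x y : ℝ} (hα : α ∈ Ioo (0:ℝ) (1/2)) (hx : x ∈ Ioo (0:ℝ) 1) (hyx : y ≤ x) :
    y ≤ (x ^ α) ^ 2 := by
  refine hyx.trans ?_
  rw [← Real.rpow_natCast, ← Real.rpow_mul hx.1.le]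
  conv_lhs => rw [← Real.rpow_one x]
  apply Real.rpow_le_rpow_of_exponent_ge hx.1 hx.2.le
  have := hα.2
  push_cast; linarith

theorem poincare_test {α₁ α₂ : ℝ} (hα₁ : α₁ ∈ Ioo (0:ℝ) (1/2)) (hα₂ : α₂ ∈ Ioo (0:ℝ) (1/2))
    {φ : ℝ × ℝ → ℝ} (h : IsTest φ) :
    ∫ p in Omega, φ p ^ 2 ≤ (∫ p in Omega, (p.2 ^ α₁ * pdx φ p) ^ 2) +
      ∫ p in Omega, (p.1 ^ α₂ * pdy φ p) ^ 2 := by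
  have hz : ∀ p, p ∉ Omega → φ p = 0 := fun p hp =>
    image_eq_zero_of_notMem_tsupport fun hh => hp (h.2.2 hh)
  have hd : Differentiable ℝ φ := h.1.differentiable (by simp)
  have i0 := h.memLp.integrable_sq
  have i1 := (memLp_mul (w1_cont hα₁.1) (h.cont_pd (1,0)) (h.supp_pd (1,0))).integrable_sq
  have i2 := (memLp_mul (w2_cont hα₂.1) (h.cont_pd (0,1)) (h.supp_pd (0,1))).integrable_sq
  change _ ≤ (∫ p in Omega, (p.2 ^ α₁ * fderiv ℝ φ p (1,0)) ^ 2) +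
      ∫ p in Omega, (p.1 ^ α₂ * fderiv ℝ φ p (0,1)) ^ 2
  set ν := volume.restrict (Ioo (0:ℝ) 1) with hν
  have : IsProbabilityMeasure ν := ⟨by simp [hν]⟩
  rw [muO_prod] at i0 i1 i2
  have key : ∀ p ∈ Omega, φ p ^ 2 ≤
      (∫ t, (p.2 ^ α₁ * fderiv ℝ φ (t, p.2) (1,0)) ^ 2 ∂ν) +
      ∫ t, (p.1 ^ α₂ * fderiv ℝ φ (p.1, t) (0,1)) ^ 2 ∂ν := by
    rintro ⟨x, y⟩ ⟨hx, hy⟩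
    simp only at hx hy ⊢
    have n1 : 0 ≤ ∫ t, (y ^ α₁ * fderiv ℝ φ (t, y) (1,0)) ^ 2 ∂ν :=
      integral_nonneg fun t => sq_nonneg _
    have n2 : 0 ≤ ∫ t, (x ^ α₂ * fderiv ℝ φ (x, t) (0,1)) ^ 2 ∂ν :=
      integral_nonneg fun t => sq_nonneg _
    rcases le_total y x with hyx | hxy
    · have := one_dim (fun t => φ (x, t)) ((h.1.of_le (by simp)).comp (by fun_prop))
        (hz _ (by simp [Omega])) y hy
      have hdv : ∀ t, deriv (fun t => φ (x, t)) t = fderiv ℝ φ (x, t) (0,1) := fun t =>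
        ((hd (x,t)).hasFDerivAt.comp_hasDerivAt t
          ((hasDerivAt_const t x).prodMk (hasDerivAt_id t))).deriv
      simp_rw [hdv] at this
      have b := pow_bd hα₂ hx hyx
      simp_rw [mul_pow, integral_const_mul] at n1 n2 ⊢
      have n3 : 0 ≤ ∫ t, (fderiv ℝ φ (x, t) (0,1)) ^ 2 ∂ν :=
        integral_nonneg fun t => sq_nonneg _
      have := this.trans (mul_le_mul_of_nonneg_right b n3)
      linarith
    · have := one_dim (fun t => φ (t, y)) ((h.1.of_le (by simp)).comp (by fun_prop))
        (hz _ (by simp [Omega])) x hx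
      have hdv : ∀ t, deriv (fun t => φ (t, y)) t = fderiv ℝ φ (t, y) (1,0) := fun t =>
        ((hd (t,y)).hasFDerivAt.comp_hasDerivAt t
          ((hasDerivAt_id t).prodMk (hasDerivAt_const t y))).deriv
      simp_rw [hdv] at this
      have b := pow_bd hα₁ hy hxy
      simp_rw [mul_pow, integral_const_mul] at n1 n2 ⊢
      have n3 : 0 ≤ ∫ t, (fderiv ℝ φ (t, y) (1,0)) ^ 2 ∂ν :=
        integral_nonneg fun t => sq_nonneg _
      have := this.trans (mul_le_mul_of_nonneg_right b n3)
      linarith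
  have j1 := i1.integral_prod_right
  have j2 := i2.integral_prod_left
  have k1 := j1.comp_snd ν
  have k2 := j2.comp_fst ν
  have e := setIntegral_mono_on (μ := volume) (s := Omega) (f := fun p => φ p ^ 2)
    (by rw [IntegrableOn, muO_prod]; exact i0)
    (by rw [IntegrableOn, muO_prod]; exact k1.add k2) isOpen_Omega.measurableSet key
  refine e.trans_eq ?_
  rw [muO_prod, ← hν, integral_add k1 k2, integral_prod_symm _ i1, integral_prod _ i2]
  congr 1
  · exact (integral_fun_snd (μ := ν) (ν := ν)
      fun y => ∫ t, (y ^ α₁ * fderiv ℝ φ (t, y) (1,0)) ^ 2 ∂ν).trans (by simp [hν])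
  · exact (integral_fun_fst (μ := ν) (ν := ν)
      fun x => ∫ t, (x ^ α₂ * fderiv ℝ φ (x, t) (0,1)) ^ 2 ∂ν).trans (by simp [hν])

theorem weak_test {φ ψ : ℝ × ℝ → ℝ} (h : IsTest φ) (hψ : IsTest ψ) (d : ℝ × ℝ) :
    ∫ p in Omega, φ p * fderiv ℝ ψ p d = - ∫ p in Omega, fderiv ℝ φ p d * ψ p := by
  have hz : ∀ p, p ∉ Omega → φ p = 0 := fun p hp =>
    image_eq_zero_of_notMem_tsupport fun hh => hp (h.2.2 hh)
  have hz' : ∀ p, p ∉ Omega → ψ p = 0 := fun p hp =>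
    image_eq_zero_of_notMem_tsupport fun hh => hp (hψ.2.2 hh)
  rw [setIntegral_eq_integral_of_forall_compl_eq_zero (fun p hp => by simp [hz p hp]),
    setIntegral_eq_integral_of_forall_compl_eq_zero (fun p hp => by simp [hz' p hp])]
  apply integral_mul_fderiv_eq_neg_fderiv_mul_of_integrable
  · exact ((h.cont_pd d).mul hψ.1.continuous).integrable_of_hasCompactSupport hψ.2.1.mul_left
  · exact (h.1.continuous.mul (hψ.cont_pd d)).integrable_of_hasCompactSupport h.2.1.mul_right
  · exact (h.1.continuous.mul hψ.1.continuous).integrable_of_hasCompactSupport h.2.1.mul_right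
  · exact fun x _ => h.1.differentiable (by simp) x
  · exact fun x _ => hψ.1.differentiable (by simp) x

abbrev L2O := Lp ℝ 2 (volume.restrict Omega)
abbrev T3 := PiLp 2 (fun _ : Fin 3 => L2O)
abbrev E4 := WithLp 2 (T3 × L2O)

def Rpr (α₁ α₂ : ℝ) (u gx gy : ℝ × ℝ → ℝ) (t : T3) : Prop :=
  (t 0 =ᵐ[volume.restrict Omega] u) ∧
  (t 1 =ᵐ[volume.restrict Omega] fun p => p.2 ^ α₁ * gx p) ∧
  (t 2 =ᵐ[volume.restrict Omega] fun p => p.1 ^ α₂ * gy p)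

theorem l2_inner {F G : L2O} {a b : ℝ × ℝ → ℝ} (hF : F =ᵐ[volume.restrict Omega] a)
    (hG : G =ᵐ[volume.restrict Omega] b) : inner ℝ F G = ∫ p in Omega, a p * b p := by
  rw [L2.inner_def]
  apply integral_congr_ae
  filter_upwards [hF, hG] with p h1 h2
  simp [h1, h2, mul_comm]

theorem l2_norm_sq {F : L2O} {a : ℝ × ℝ → ℝ} (hF : F =ᵐ[volume.restrict Omega] a) :
    ‖F‖ ^ 2 = ∫ p in Omega, a p ^ 2 := by
  rw [← real_inner_self_eq_norm_sq, l2_inner hF hF]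
  simp_rw [sq]

theorem Rpr.sub {α₁ α₂ : ℝ} {u gx gy v hx hy : ℝ × ℝ → ℝ} {t s : T3}
    (ht : Rpr α₁ α₂ u gx gy t) (hs : Rpr α₁ α₂ v hx hy s) :
    Rpr α₁ α₂ (fun p => u p - v p) (fun p => gx p - hx p) (fun p => gy p - hy p) (t - s) := by
  refine ⟨?_, ?_, ?_⟩
  · filter_upwards [Lp.coeFn_sub (t 0) (s 0), ht.1, hs.1] with p h h1 h2
    simp only [PiLp.sub_apply, h, Pi.sub_apply, h1, h2]
  · filter_upwards [Lp.coeFn_sub (t 1) (s 1), ht.2.1, hs.2.1] with p h h1 h2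
    simp only [PiLp.sub_apply, h, Pi.sub_apply, h1, h2]; ring
  · filter_upwards [Lp.coeFn_sub (t 2) (s 2), ht.2.2, hs.2.2] with p h h1 h2
    simp only [PiLp.sub_apply, h, Pi.sub_apply, h1, h2]; ring

theorem Rpr.add {α₁ α₂ : ℝ} {u gx gy v hx hy : ℝ × ℝ → ℝ} {t s : T3}
    (ht : Rpr α₁ α₂ u gx gy t) (hs : Rpr α₁ α₂ v hx hy s) :
    Rpr α₁ α₂ (fun p => u p + v p) (fun p => gx p + hx p) (fun p => gy p + hy p) (t + s) := by
  refine ⟨?_, ?_, ?_⟩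
  · filter_upwards [Lp.coeFn_add (t 0) (s 0), ht.1, hs.1] with p h h1 h2
    simp only [PiLp.add_apply, h, Pi.add_apply, h1, h2]
  · filter_upwards [Lp.coeFn_add (t 1) (s 1), ht.2.1, hs.2.1] with p h h1 h2
    simp only [PiLp.add_apply, h, Pi.add_apply, h1, h2]; ring
  · filter_upwards [Lp.coeFn_add (t 2) (s 2), ht.2.2, hs.2.2] with p h h1 h2
    simp only [PiLp.add_apply, h, Pi.add_apply, h1, h2]; ring

theorem Rpr.smul {α₁ α₂ : ℝ} {u gx gy : ℝ × ℝ → ℝ} {t : T3}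
    (ht : Rpr α₁ α₂ u gx gy t) (c : ℝ) :
    Rpr α₁ α₂ (fun p => c * u p) (fun p => c * gx p) (fun p => c * gy p) (c • t) := by
  refine ⟨?_, ?_, ?_⟩
  · filter_upwards [Lp.coeFn_smul c (t 0), ht.1] with p h h1
    simp only [PiLp.smul_apply, h, Pi.smul_apply, h1, smul_eq_mul]
  · filter_upwards [Lp.coeFn_smul c (t 1), ht.2.1] with p h h1
    simp only [PiLp.smul_apply, h, Pi.smul_apply, h1, smul_eq_mul]; ring
  · filter_upwards [Lp.coeFn_smul c (t 2), ht.2.2] with p h h1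
    simp only [PiLp.smul_apply, h, Pi.smul_apply, h1, smul_eq_mul]; ring

theorem Rpr.norm {α₁ α₂ : ℝ} {u gx gy : ℝ × ℝ → ℝ} {t : T3}
    (ht : Rpr α₁ α₂ u gx gy t) : ‖t‖ = H1Norm α₁ α₂ u gx gy := by
  rw [PiLp.norm_eq_of_L2, H1Norm, Fin.sum_univ_three, l2_norm_sq ht.1, l2_norm_sq ht.2.1,
    l2_norm_sq ht.2.2]

theorem IsTest.add {φ ψ : ℝ × ℝ → ℝ} (h : IsTest φ) (h' : IsTest ψ) :
    IsTest (fun p => φ p + ψ p) :=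
  ⟨h.1.add h'.1, h.2.1.add h'.2.1, (tsupport_add φ ψ).trans (union_subset h.2.2 h'.2.2)⟩

theorem IsTest.smul {φ : ℝ × ℝ → ℝ} (h : IsTest φ) (c : ℝ) :
    IsTest (fun p => c * φ p) :=
  ⟨contDiff_const.mul h.1, h.2.1.mul_left, (tsupport_mul_subset_right).trans h.2.2⟩

theorem isTest_zero : IsTest (fun _ => 0) :=
  ⟨contDiff_const, HasCompactSupport.zero, by simp [tsupport]⟩

theorem IsTest.da {φ : ℝ × ℝ → ℝ} (h : IsTest φ) (p) : DifferentiableAt ℝ φ p :=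
  h.1.differentiable (by simp) p

def testSub (α₁ α₂ : ℝ) : Submodule ℝ T3 where
  carrier := {t | ∃ φ, IsTest φ ∧ Rpr α₁ α₂ φ (pdx φ) (pdy φ) t}
  add_mem' := by
    rintro a b ⟨φ, h, ha⟩ ⟨ψ, h', hb⟩
    refine ⟨_, h.add h', ?_⟩
    have := ha.add hb
    convert this using 1
    · ext p; simp only [pdx]; rw [fderiv_fun_add (h.da p) (h'.da p)]; rfl
    · ext p; simp only [pdy]; rw [fderiv_fun_add (h.da p) (h'.da p)]; rfl
  zero_mem' := by
    refine ⟨_, isTest_zero, ?_⟩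
    have hz := Lp.coeFn_zero ℝ 2 (volume.restrict Omega)
    refine ⟨?_, ?_, ?_⟩ <;>
    · filter_upwards [hz] with p hp
      simp only [PiLp.zero_apply, hp]
      simp [pdx, pdy]
  smul_mem' := by
    rintro c a ⟨φ, h, ha⟩
    refine ⟨_, h.smul c, ?_⟩
    have := ha.smul c
    convert this using 1
    · ext p; simp only [pdx]; rw [fderiv_const_mul (h.da p)]; rfl
    · ext p; simp only [pdy]; rw [fderiv_const_mul (h.da p)]; rfl

theorem exists_rep {α₁ α₂ : ℝ} {u gx gy : ℝ × ℝ → ℝ} (h0 : MemLp u 2 (volume.restrict Omega))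
    (h1 : MemLp (fun p => p.2 ^ α₁ * gx p) 2 (volume.restrict Omega))
    (h2 : MemLp (fun p => p.1 ^ α₂ * gy p) 2 (volume.restrict Omega)) :
    ∃ t : T3, Rpr α₁ α₂ u gx gy t :=
  ⟨WithLp.toLp 2 ![h0.toLp _, h1.toLp _, h2.toLp _], h0.coeFn_toLp, h1.coeFn_toLp, h2.coeFn_toLp⟩

theorem IsTest.exists_rep {α₁ α₂ : ℝ} (hα₁ : 0 < α₁) (hα₂ : 0 < α₂)
    {φ : ℝ × ℝ → ℝ} (h : IsTest φ) : ∃ t : T3, Rpr α₁ α₂ φ (pdx φ) (pdy φ) t :=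
  _root_.exists_rep h.memLp (memLp_mul (w1_cont hα₁) (h.cont_pd (1,0)) (h.supp_pd (1,0)))
    (memLp_mul (w2_cont hα₂) (h.cont_pd (0,1)) (h.supp_pd (0,1)))

theorem MemH10.mem_closure {α₁ α₂ : ℝ} (hα₁ : 0 < α₁) (hα₂ : 0 < α₂) {u gx gy : ℝ × ℝ → ℝ}
    (h : MemH10 α₁ α₂ u gx gy) {t : T3} (ht : Rpr α₁ α₂ u gx gy t) :
    t ∈ (testSub α₁ α₂).topologicalClosure := by
  change t ∈ closure (testSub α₁ α₂ : Set T3)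
  rw [Metric.mem_closure_iff]
  intro ε hε
  obtain ⟨φ, hφ, hlt⟩ := h.2 ε hε
  obtain ⟨s, hs⟩ := hφ.exists_rep hα₁ hα₂
  refine ⟨s, ⟨φ, hφ, hs⟩, ?_⟩
  rw [dist_eq_norm, (ht.sub hs).norm]
  exact hlt

theorem closure_poincare {α₁ α₂ : ℝ} (hα₁ : α₁ ∈ Ioo (0:ℝ) (1/2)) (hα₂ : α₂ ∈ Ioo (0:ℝ) (1/2))
    {t : T3} (ht : t ∈ (testSub α₁ α₂).topologicalClosure) :
    ‖t 0‖ ^ 2 ≤ ‖t 1‖ ^ 2 + ‖t 2‖ ^ 2 := by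
  have hc : IsClosed {t : T3 | ‖t 0‖ ^ 2 ≤ ‖t 1‖ ^ 2 + ‖t 2‖ ^ 2} :=
    isClosed_le (by fun_prop) (by fun_prop)
  refine closure_minimal ?_ hc ht
  rintro s ⟨φ, hφ, hs⟩
  simp only [mem_ofPred_eq]
  rw [l2_norm_sq hs.1, l2_norm_sq hs.2.1, l2_norm_sq hs.2.2]
  exact poincare_test hα₁ hα₂ hφ

/-- weak derivative identity on the closure -/
theorem closure_weak {α₁ α₂ : ℝ} {t : T3} (ht : t ∈ (testSub α₁ α₂).topologicalClosure)
    (i : Fin 3) (w : ℝ × ℝ → ℝ) (d : ℝ × ℝ) (hw : ContinuousOn w Omega) (hw0 : ∀ p ∈ Omega, w p ≠ 0)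
    (hi : ∀ s : T3, ∀ φ : ℝ × ℝ → ℝ, Rpr α₁ α₂ φ (pdx φ) (pdy φ) s →
      s i =ᵐ[volume.restrict Omega] fun p => w p * fderiv ℝ φ p d)
    {ψ : ℝ × ℝ → ℝ} (hψ : IsTest ψ) :
    ∫ p in Omega, t 0 p * fderiv ℝ ψ p d = - ∫ p in Omega, ((w p)⁻¹ * t i p) * ψ p := by
  have hc : Continuous fun p => (w p)⁻¹ * ψ p := by
    apply ContinuousOn.continuous_of_tsupport_subset (s := Omega) _ isOpen_Omega
    · exact tsupport_mul_subset_right.trans hψ.2.2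
    · exact (hw.inv₀ hw0).mul hψ.1.continuous.continuousOn
  have m1 : MemLp (fun p => (w p)⁻¹ * ψ p) 2 (volume.restrict Omega) :=
    (hc.memLp_of_hasCompactSupport hψ.2.1.mul_left).restrict _
  have m2 := hψ.memLp_pd d
  have hcl : IsClosed {t : T3 | inner ℝ (t 0) (m2.toLp _) = - inner ℝ (t i) (m1.toLp _)} :=
    isClosed_eq (by fun_prop) (by fun_prop)
  have := closure_minimal (s := (testSub α₁ α₂ : Set T3)) ?_ hcl ht
  · simp only [mem_ofPred_eq] at this
    rw [l2_inner EventuallyEq.rfl m2.coeFn_toLp, l2_inner EventuallyEq.rfl m1.coeFn_toLp] at this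
    rw [this]
    congr 2
    ext p; ring
  · rintro s ⟨φ, hφ, hs⟩
    simp only [mem_ofPred_eq]
    rw [l2_inner hs.1 m2.coeFn_toLp, l2_inner (hi s φ hs) m1.coeFn_toLp, weak_test hφ hψ d]
    congr 1
    apply setIntegral_congr_fun isOpen_Omega.measurableSet
    intro p hp
    have := hw0 p hp
    simp only
    field_simp

theorem w1_pos {α : ℝ} {p : ℝ × ℝ} (hp : p ∈ Omega) : 0 < p.2 ^ α := Real.rpow_pos_of_pos hp.2.1 _
theorem w2_pos {α : ℝ} {p : ℝ × ℝ} (hp : p ∈ Omega) : 0 < p.1 ^ α := Real.rpow_pos_of_pos hp.1.1 _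

theorem li_lp (F : L2O) : LocallyIntegrableOn F Omega volume := by
  have : IntegrableOn F Omega volume := (Lp.memLp F).integrable (by norm_num)
  exact this.locallyIntegrableOn

theorem exists_of_closure {α₁ α₂ : ℝ} (hα₁ : 0 < α₁) (hα₂ : 0 < α₂)
    {t : T3} (ht : t ∈ (testSub α₁ α₂).topologicalClosure) :
    ∃ u gx gy, MemH10 α₁ α₂ u gx gy ∧ Rpr α₁ α₂ u gx gy t := by
  have r1 : (fun p => p.2 ^ α₁ * ((p.2 ^ α₁)⁻¹ * t 1 p)) =ᵐ[volume.restrict Omega] t 1 := by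
    filter_upwards [ae_restrict_mem isOpen_Omega.measurableSet] with p hp
    rw [mul_inv_cancel_left₀ (w1_pos hp).ne']
  have r2 : (fun p => p.1 ^ α₂ * ((p.1 ^ α₂)⁻¹ * t 2 p)) =ᵐ[volume.restrict Omega] t 2 := by
    filter_upwards [ae_restrict_mem isOpen_Omega.measurableSet] with p hp
    rw [mul_inv_cancel_left₀ (w2_pos hp).ne']
  have hr : Rpr α₁ α₂ (t 0) (fun p => (p.2 ^ α₁)⁻¹ * t 1 p) (fun p => (p.1 ^ α₂)⁻¹ * t 2 p) t :=
    ⟨EventuallyEq.rfl, r1.symm, r2.symm⟩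
  refine ⟨_, _, _, ⟨⟨Lp.memLp _, ⟨li_lp _, ?_, ?_⟩, ⟨li_lp _, ?_, ?_⟩, ?_, ?_⟩, ?_⟩, hr⟩
  · exact (li_lp _).continuousOn_mul ((w1_cont hα₁).continuousOn.inv₀ fun p hp => (w1_pos hp).ne')
      isOpen_Omega.isLocallyClosed
  · intro ψ hψ
    exact closure_weak ht 1 (fun p => p.2 ^ α₁) (1,0) (w1_cont hα₁).continuousOn
      (fun p hp => (w1_pos hp).ne') (fun s φ hs => hs.2.1) hψ
  · exact (li_lp _).continuousOn_mul ((w2_cont hα₂).continuousOn.inv₀ fun p hp => (w2_pos hp).ne')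
      isOpen_Omega.isLocallyClosed
  · intro ψ hψ
    exact closure_weak ht 2 (fun p => p.1 ^ α₂) (0,1) (w2_cont hα₂).continuousOn
      (fun p hp => (w2_pos hp).ne') (fun s φ hs => hs.2.2) hψ
  · exact (memLp_congr_ae r1).2 (Lp.memLp _)
  · exact (memLp_congr_ae r2).2 (Lp.memLp _)
  · intro ε hε
    have ht' : t ∈ closure (testSub α₁ α₂ : Set T3) := ht
    rw [Metric.mem_closure_iff] at ht'
    obtain ⟨s, ⟨φ, hφ, hs⟩, hd⟩ := ht' ε hε
    refine ⟨φ, hφ, ?_⟩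
    rw [dist_eq_norm, (hr.sub hs).norm] at hd
    exact hd

def solSub (α₁ α₂ : ℝ) (V : ℝ × ℝ → ℝ) : Submodule ℝ E4 where
  carrier := {e | e.fst ∈ (testSub α₁ α₂).topologicalClosure ∧
    e.snd =ᵐ[volume.restrict Omega] fun p => √(V p) * e.fst 0 p}
  add_mem' := by
    rintro a b ⟨ha, ha'⟩ ⟨hb, hb'⟩
    refine ⟨add_mem ha hb, ?_⟩
    filter_upwards [Lp.coeFn_add a.snd b.snd, Lp.coeFn_add (a.fst 0) (b.fst 0), ha', hb']
      with p h1 h2 h3 h4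
    simp only [WithLp.add_fst, WithLp.add_snd, PiLp.add_apply, h1, h2, Pi.add_apply, h3, h4]
    ring
  zero_mem' := by
    refine ⟨zero_mem _, ?_⟩
    filter_upwards [Lp.coeFn_zero ℝ 2 (volume.restrict Omega)] with p hp
    simp only [WithLp.zero_fst, WithLp.zero_snd, PiLp.zero_apply, hp]
    simp
  smul_mem' := by
    rintro c a ⟨ha, ha'⟩
    refine ⟨Submodule.smul_mem _ c ha, ?_⟩
    filter_upwards [Lp.coeFn_smul c a.snd, Lp.coeFn_smul c (a.fst 0), ha']
      with p h1 h2 h3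
    simp only [WithLp.smul_fst, WithLp.smul_snd, PiLp.smul_apply, h1, h2, Pi.smul_apply, h3,
      smul_eq_mul]
    ring

theorem solSub_closed (α₁ α₂ : ℝ) (V : ℝ × ℝ → ℝ) : IsClosed (solSub α₁ α₂ V : Set E4) := by
  apply IsSeqClosed.isClosed
  intro e a he hlim
  have l1 : Tendsto (fun n => (e n).fst) atTop (nhds a.fst) :=
    (WithLp.continuous_fst 2 T3 L2O).continuousAt.tendsto.comp hlim
  have l2 : Tendsto (fun n => (e n).snd) atTop (nhds a.snd) :=
    (WithLp.continuous_snd 2 T3 L2O).continuousAt.tendsto.comp hlim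
  have l3 : Tendsto (fun n => (e n).fst 0) atTop (nhds (a.fst 0)) :=
    (by fun_prop : Continuous fun t : T3 => t 0).continuousAt.tendsto.comp l1
  refine ⟨(testSub α₁ α₂).isClosed_topologicalClosure.mem_of_tendsto l1
    (Eventually.of_forall fun n => (he n).1), ?_⟩
  obtain ⟨k, hk, hk'⟩ := (tendstoInMeasure_of_tendsto_Lp l2).exists_seq_tendsto_ae
  obtain ⟨m, hm, hm'⟩ := (tendstoInMeasure_of_tendsto_Lp
    (l3.comp hk.tendsto_atTop)).exists_seq_tendsto_ae
  have hall := ae_all_iff.2 fun n => (he n).2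
  filter_upwards [hk', hm', hall] with p h1 h2 h3
  refine tendsto_nhds_unique (h1.comp hm.tendsto_atTop) ?_
  have := h2.const_mul (√(V p))
  refine this.congr fun n => ?_
  simp only [Function.comp_apply]
  exact (h3 _).symm

instance (α₁ α₂ : ℝ) (V : ℝ × ℝ → ℝ) : CompleteSpace (solSub α₁ α₂ V) :=
  (solSub_closed α₁ α₂ V).completeSpace_coe

/-- the bilinear form on the closed subspace -/
def bForm (α₁ α₂ : ℝ) (V : ℝ × ℝ → ℝ) :
    solSub α₁ α₂ V →L[ℝ] solSub α₁ α₂ V →L[ℝ] ℝ :=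
  LinearMap.mkContinuous₂
    (LinearMap.mk₂ ℝ (fun u v => inner ℝ (u : E4) (v : E4) -
        inner ℝ ((u : E4).fst 0) ((v : E4).fst 0))
      (fun a b c => by simp [inner_add_left]; ring)
      (fun r a b => by simp [inner_smul_left]; ring)
      (fun a b c => by simp [inner_add_right]; ring)
      (fun r a b => by simp [inner_smul_right]; ring)) 2
    (fun u v => by
      simp only [LinearMap.mk₂_apply]
      have h1 := norm_inner_le_norm (𝕜 := ℝ) (u : E4) (v : E4)
      have h2 := norm_inner_le_norm (𝕜 := ℝ) ((u : E4).fst 0) ((v : E4).fst 0)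
      have a1 : ‖(u : E4).fst 0‖ ≤ ‖u‖ :=
        (PiLp.norm_apply_le _ _).trans (WithLp.norm_fst_le _ _ : ‖(u : E4).fst‖ ≤ ‖(u : E4)‖)
      have a2 : ‖(v : E4).fst 0‖ ≤ ‖v‖ :=
        (PiLp.norm_apply_le _ _).trans (WithLp.norm_fst_le _ _ : ‖(v : E4).fst‖ ≤ ‖(v : E4)‖)
      have h3 := norm_sub_le (inner ℝ (u : E4) (v : E4))
        (inner ℝ ((u : E4).fst 0) ((v : E4).fst 0))
      have h4 := mul_le_mul a1 a2 (norm_nonneg _) (norm_nonneg _)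
      simp only [Submodule.coe_norm] at *
      linarith)

theorem bForm_apply {α₁ α₂ : ℝ} {V : ℝ × ℝ → ℝ} (u v : solSub α₁ α₂ V) :
    bForm α₁ α₂ V u v = inner ℝ ((u : E4).fst 1) ((v : E4).fst 1) +
      inner ℝ ((u : E4).fst 2) ((v : E4).fst 2) + inner ℝ (u : E4).snd (v : E4).snd := by
  change inner ℝ (u : E4) (v : E4) - inner ℝ ((u : E4).fst 0) ((v : E4).fst 0) = _
  rw [WithLp.prod_inner_apply, PiLp.inner_apply, Fin.sum_univ_three]
  change _ + inner ℝ (u : E4).snd (v : E4).snd - _ = _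
  simp only [WithLp.ofLp_fst]
  ring

theorem bForm_coercive {α₁ α₂ : ℝ} (hα₁ : α₁ ∈ Ioo (0:ℝ) (1/2)) (hα₂ : α₂ ∈ Ioo (0:ℝ) (1/2))
    (V : ℝ × ℝ → ℝ) : IsCoercive (bForm α₁ α₂ V) := by
  refine ⟨1/2, by norm_num, fun u => ?_⟩
  rw [bForm_apply]
  simp only [real_inner_self_eq_norm_sq]
  have h := closure_poincare hα₁ hα₂ u.2.1
  have h2 : ‖u‖ * ‖u‖ = ‖(u : E4).fst 0‖ ^ 2 + ‖(u : E4).fst 1‖ ^ 2 + ‖(u : E4).fst 2‖ ^ 2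
      + ‖(u : E4).snd‖ ^ 2 := by
    rw [← sq, Submodule.coe_norm, WithLp.prod_norm_sq_eq_of_L2, PiLp.norm_sq_eq_of_L2,
      Fin.sum_univ_three]
  have := sq_nonneg ‖(u : E4).snd‖
  rw [mul_assoc, h2]
  linarith

theorem sqrtV_meas {V : ℝ × ℝ → ℝ} (hV : AEStronglyMeasurable V (volume.restrict Omega)) :
    AEStronglyMeasurable (fun p => √(V p)) (volume.restrict Omega) :=
  Real.continuous_sqrt.comp_aestronglyMeasurable hV

theorem MemH0.exists_sol {α₁ α₂ : ℝ} (hα₁ : 0 < α₁) (hα₂ : 0 < α₂) {V u gx gy : ℝ × ℝ → ℝ}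
    (hV : AEStronglyMeasurable V (volume.restrict Omega))
    (hVpos : ∀ᵐ p ∂(volume.restrict Omega), 0 ≤ V p) (h : MemH0 α₁ α₂ V u gx gy) :
    ∃ e : solSub α₁ α₂ V, Rpr α₁ α₂ u gx gy (e : E4).fst := by
  obtain ⟨t, ht⟩ := exists_rep h.1.1.memL2 h.1.1.wgx h.1.1.wgy
  have m : MemLp (fun p => √(V p) * u p) 2 (volume.restrict Omega) := by
    have hm : AEStronglyMeasurable (fun p => √(V p) * u p) (volume.restrict Omega) :=
      (sqrtV_meas hV).mul h.1.1.memL2.1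
    rw [memLp_two_iff_integrable_sq hm]
    refine (integrable_congr ?_).1 h.2
    filter_upwards [hVpos] with p hp
    rw [mul_pow, Real.sq_sqrt hp]
  refine ⟨⟨WithLp.toLp 2 (t, m.toLp _), h.1.mem_closure hα₁ hα₂ ht, ?_⟩, ht⟩
  filter_upwards [m.coeFn_toLp, ht.1] with p h1 h2
  simp only [WithLp.toLp_fst, WithLp.toLp_snd, h1, h2]

theorem sol_exists {α₁ α₂ : ℝ} (hα₁ : 0 < α₁) (hα₂ : 0 < α₂) {V : ℝ × ℝ → ℝ}
    (hVpos : ∀ᵐ p ∂(volume.restrict Omega), 0 ≤ V p) (e : solSub α₁ α₂ V) :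
    ∃ u gx gy, MemH0 α₁ α₂ V u gx gy ∧ Rpr α₁ α₂ u gx gy (e : E4).fst := by
  obtain ⟨u, gx, gy, h, hr⟩ := exists_of_closure hα₁ hα₂ e.2.1
  refine ⟨u, gx, gy, ⟨h, ?_⟩, hr⟩
  refine (integrable_congr ?_).1 (Lp.memLp (e : E4).snd).integrable_sq
  filter_upwards [e.2.2, hr.1, hVpos] with p h1 h2 hp
  rw [h1, h2, mul_pow, Real.sq_sqrt hp]

theorem aForm_eq {α₁ α₂ : ℝ} {V u gx gy v hx hy : ℝ × ℝ → ℝ}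
    (hVpos : ∀ᵐ p ∂(volume.restrict Omega), 0 ≤ V p) {e e' : solSub α₁ α₂ V}
    (h : Rpr α₁ α₂ u gx gy (e : E4).fst) (h' : Rpr α₁ α₂ v hx hy (e' : E4).fst) :
    aForm α₁ α₂ V u gx gy v hx hy = bForm α₁ α₂ V e e' := by
  rw [bForm_apply, L2.inner_def, L2.inner_def, L2.inner_def,
    ← integral_add (L2.integrable_inner _ _) (L2.integrable_inner _ _),
    ← integral_add ((L2.integrable_inner _ _).add (L2.integrable_inner _ _))
      (L2.integrable_inner _ _), aForm]
  apply integral_congr_ae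
  filter_upwards [h.1, h.2.1, h.2.2, h'.1, h'.2.1, h'.2.2, e.2.2, e'.2.2, hVpos]
    with p a0 a1 a2 b0 b1 b2 c c' hp
  simp only [a1, a2, b1, b2, c, c', a0, b0, RCLike.inner_apply, conj_trivial]
  have := Real.mul_self_sqrt hp
  linear_combination (- u p * v p) * this

theorem lax_milgram {H : Type*} [NormedAddCommGroup H] [InnerProductSpace ℝ H] [CompleteSpace H]
    (B : H →L[ℝ] H →L[ℝ] ℝ) (hB : IsCoercive B) (P : H →L[ℝ] ℝ) :
    ∃ e, (∀ e', B e e' = P e') ∧ ∀ d, (∀ e', B d e' = P e') → d = e := by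
  have he : ∀ e', B (hB.continuousLinearEquivOfBilin.symm
      ((InnerProductSpace.toDual ℝ H).symm P)) e' = P e' := by
    intro e'
    rw [← hB.continuousLinearEquivOfBilin_apply, ContinuousLinearEquiv.apply_symm_apply]
    exact InnerProductSpace.toDual_symm_apply
  refine ⟨_, he, fun d hd => ?_⟩
  apply hB.continuousLinearEquivOfBilin.injective
  refine ext_inner_right ℝ fun e' => ?_
  rw [hB.continuousLinearEquivOfBilin_apply, hB.continuousLinearEquivOfBilin_apply, hd, he]

theorem exists_functional (α₁ α₂ : ℝ) (V : ℝ × ℝ → ℝ) (F : L2O) :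
    ∃ P : solSub α₁ α₂ V →L[ℝ] ℝ, ∀ e, P e = inner ℝ F ((e : E4).fst 0) :=
  ⟨LinearMap.mkContinuous
    { toFun := fun e => inner ℝ F ((e : E4).fst 0)
      map_add' := fun a b => by simp [inner_add_right]
      map_smul' := fun c a => by simp [inner_smul_right] } ‖F‖ fun e => by
      have a1 : ‖(e : E4).fst 0‖ ≤ ‖e‖ :=
        (PiLp.norm_apply_le _ _).trans (WithLp.norm_fst_le _ _ : ‖(e : E4).fst‖ ≤ ‖(e : E4)‖)
      exact (norm_inner_le_norm (𝕜 := ℝ) F ((e : E4).fst 0)).trans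
        (mul_le_mul_of_nonneg_left a1 (norm_nonneg _)), fun _ => rfl⟩

/-- For `V ∈ L^p(Ω)`, `1 < p < ∞`, `V ≥ 0` a.e. and `f ∈ L²(Ω)`, the
Dirichlet problem has a unique weak solution `u ∈ H₀(Ω)`:
`a(u,v) = ∫_Ω f v` for all `v ∈ H₀(Ω)`, and any other weak solution agrees with `u`
a.e. on `Ω`. -/
theorem exists_unique_weak_solution (α₁ α₂ ppow : ℝ)
    (hα₁ : α₁ ∈ Ioo (0:ℝ) (1/2)) (hα₂ : α₂ ∈ Ioo (0:ℝ) (1/2))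
    (hp : 1 < ppow) (V : ℝ × ℝ → ℝ)
    (hV : MemLp V (ENNReal.ofReal ppow) (volume.restrict Omega))
    (hVpos : ∀ᵐ p ∂(volume.restrict Omega), 0 ≤ V p)
    (f : ℝ × ℝ → ℝ) (hf : MemLp f 2 (volume.restrict Omega)) :
    ∃ u gx gy : ℝ × ℝ → ℝ, MemH0 α₁ α₂ V u gx gy ∧
      (∀ v hx hy : ℝ × ℝ → ℝ, MemH0 α₁ α₂ V v hx hy →
        aForm α₁ α₂ V u gx gy v hx hy = ∫ p in Omega, f p * v p) ∧
      (∀ u' gx' gy' : ℝ × ℝ → ℝ, MemH0 α₁ α₂ V u' gx' gy' →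
        (∀ v hx hy : ℝ × ℝ → ℝ, MemH0 α₁ α₂ V v hx hy →
          aForm α₁ α₂ V u' gx' gy' v hx hy = ∫ p in Omega, f p * v p) →
        (∀ᵐ p ∂(volume.restrict Omega), u' p = u p)) := by
  have hα₁' := hα₁.1
  have hα₂' := hα₂.1
  have hco := bForm_coercive hα₁ hα₂ V
  obtain ⟨P, hP'⟩ := exists_functional α₁ α₂ V (hf.toLp f)
  have hP : ∀ (e : solSub α₁ α₂ V) (v hx hy : ℝ × ℝ → ℝ), Rpr α₁ α₂ v hx hy (e : E4).fst →
      P e = ∫ p in Omega, f p * v p := by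
    intro e v hx hy h
    rw [hP', l2_inner hf.coeFn_toLp h.1]
  obtain ⟨e, he, huniq⟩ := lax_milgram (H := solSub α₁ α₂ V) (bForm α₁ α₂ V) hco P
  obtain ⟨u, gx, gy, hu, hr⟩ := sol_exists hα₁' hα₂' hVpos e
  refine ⟨u, gx, gy, hu, ?_, ?_⟩
  · intro v hx hy hv
    obtain ⟨e', hr'⟩ := hv.exists_sol hα₁' hα₂' hV.1 hVpos
    rw [aForm_eq hVpos hr hr', he, hP e' v hx hy hr']
  · intro u' gx' gy' hu' hsol
    obtain ⟨d, hd⟩ := hu'.exists_sol hα₁' hα₂' hV.1 hVpos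
    have hde : ∀ e', bForm α₁ α₂ V d e' = P e' := by
      intro e'
      obtain ⟨v, hx, hy, hv, hr'⟩ := sol_exists hα₁' hα₂' hVpos e'
      rw [← aForm_eq hVpos hd hr', hsol v hx hy hv, hP e' v hx hy hr']
    have : d = e := huniq d hde
    subst this
    filter_upwards [hd.1, hr.1] with p h1 h2
    rw [← h1, ← h2]
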